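/- arXiv:1609.06965 — 2 statements merged into one kernel-verified Lean document; each statement's English description precedes it below -/
import Mathlib

section
/- Let C be a chain complex of R-modules with bounded-below homology such that H_i(C) is a finitely generated R-module for every i. Then C admits a minimal resolution: there exist a bounded-below minimal chain complex F of finitely generated free R-modules and a quasi-isomorphism F → C. Moreover, any two minimal resolutions of C are isomorphic as chain complexes (though the isomorphism is not necessarily unique). -/
/-!
STATEMENT 1: Let `R` be a (possibly non-commutative) Noetherian local ring with maximal
ideal `m` (= the set of nonunits) and residue field `k = R/m` a field.  Let `C` be a chain
complex of `R`-modules with bounded-below homology, such that `H_i(C)` is a finitely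
generated `R`-module for every `i`.  Then `C` admits a minimal resolution: there exist a
bounded-below minimal chain complex `F` of finitely generated free `R`-modules and a
quasi-isomorphism `F → C`.  Moreover, any two minimal resolutions of `C` are isomorphic
as chain complexes (though the isomorphism is not necessarily unique).
-/

/-- The submodule `m·M` of an `R`-module `M`, for a left ideal `m` of `R`. -/
def idealSMulTop {R : Type} [Ring R] (m : Ideal R) (M : Type) [AddCommGroup M]
    [Module R M] : Submodule R M :=
  Submodule.span R {z : M | ∃ a ∈ m, ∃ y : M, z = a • y}

/-- A chain complex of `R`-modules is minimal (w.r.t. the ideal `m`) if all its boundary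
maps have image contained in `m` times the target. -/
def IsMinimalComplex {R : Type} [Ring R] (m : Ideal R)
    (F : ChainComplex (ModuleCat R) ℤ) : Prop :=
  ∀ (i j : ℤ) (x : F.X i), F.d i j x ∈ idealSMulTop m ↥(F.X j)

/-- `F` (with the chain map `f : F ⟶ C`) is a minimal resolution of `C`: `F` is a
bounded-below minimal complex of finitely generated free `R`-modules and `f` is a
quasi-isomorphism. -/
def IsMinimalResolution {R : Type} [Ring R] (m : Ideal R)
    (F C : ChainComplex (ModuleCat R) ℤ) (f : F ⟶ C) : Prop :=
  (∀ i, Module.Free R ↥(F.X i)) ∧ (∀ i, Module.Finite R ↥(F.X i)) ∧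
    IsMinimalComplex m F ∧ (∃ N : ℤ, ∀ i < N, Subsingleton ↥(F.X i)) ∧ QuasiIso f

theorem aux_right {R : Type} [Ring R] [Nontrivial R]
    (m : Ideal R) (hloc : ∀ x : R, x ∈ m ↔ x ∈ nonunits R) (a b : R) (ha : a ∈ m) :
    a * b ∈ m := by
  rw [hloc]
  intro hu
  obtain ⟨u, hu⟩ := hu
  have hac : a * (b * (↑u⁻¹ : R)) = 1 := by rw [← mul_assoc, ← hu]; simp
  set c := b * (↑u⁻¹ : R) with hc
  have h1 : IsUnit (1 - c * a) := by
    by_contra h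
    have h2 : 1 - c * a ∈ m := (hloc _).2 h
    have h3 : (1 : R) ∈ m := by
      have := m.add_mem h2 (m.mul_mem_left c ha)
      simpa using this
    exact (hloc 1).1 h3 isUnit_one
  have h4 : a * (1 - c * a) = 0 := by
    rw [mul_sub, ← mul_assoc, hac]; simp
  have h5 : a = 0 := by
    rwa [h1.mul_left_eq_zero] at h4
  rw [h5, zero_mul] at hac
  exact zero_ne_one hac

theorem aux_one {R : Type} [Ring R]
    (m : Ideal R) (hloc : ∀ x : R, x ∈ m ↔ x ∈ nonunits R) : (1 : R) ∉ m :=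
  fun h => (hloc 1).1 h isUnit_one

theorem aux_mingens {R : Type} [Ring R]
    (m : Ideal R) (hloc : ∀ x : R, x ∈ m ↔ x ∈ nonunits R)
    (M : Type) [AddCommGroup M] [Module R M] [hM : Module.Finite R M] :
    ∃ (r : ℕ) (v : Fin r → M), Submodule.span R (Set.range v) = ⊤ ∧
      ∀ x : Fin r → R, ∑ i, x i • v i = 0 → ∀ i, x i ∈ m := by
  classical
  have hex : ∃ r : ℕ, ∃ v : Fin r → M, Submodule.span R (Set.range v) = ⊤ := by
    obtain ⟨n, s, h⟩ := Module.Finite.exists_fin (R := R) (M := M)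
    exact ⟨n, s, h⟩
  obtain ⟨v, hv⟩ := Nat.find_spec hex
  have hmin := fun k => Nat.find_min hex (m := k)
  revert v
  generalize Nat.find hex = r at hmin
  intro v hv
  refine ⟨r, v, hv, ?_⟩
  intro x hx i
  rw [hloc]
  rintro ⟨u, hu⟩
  cases r with
  | zero => exact i.elim0
  | succ r =>
    refine hmin r (Nat.lt_succ_self r) ⟨fun j => v (i.succAbove j), ?_⟩
    rw [eq_top_iff, ← hv, Submodule.span_le]
    rintro _ ⟨j, rfl⟩
    by_cases hj : j = i
    · subst hj
      rw [Fin.sum_univ_succAbove _ j] at hx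
      have h1 : v j = -((↑u⁻¹ : R) • ∑ k, x (j.succAbove k) • v (j.succAbove k)) := by
        have h2 := congrArg (fun z => (↑u⁻¹ : R) • z) hx
        simp only [smul_add, smul_zero, ← hu, smul_smul, Units.inv_mul, one_smul] at h2
        exact eq_neg_of_add_eq_zero_left h2
      rw [h1]
      refine Submodule.neg_mem _ (Submodule.smul_mem _ _ (Submodule.sum_mem _ fun k _ =>
        Submodule.smul_mem _ _ (Submodule.subset_span ⟨k, rfl⟩)))
    · obtain ⟨k, rfl⟩ := Fin.exists_succAbove_eq hj
      exact Submodule.subset_span ⟨k, rfl⟩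

theorem aux_memsmul {R : Type} [Ring R] [Nontrivial R]
    (m : Ideal R) (hloc : ∀ x : R, x ∈ m ↔ x ∈ nonunits R)
    (M : Type) [AddCommGroup M] [Module R M] {r : ℕ} (v : Fin r → M)
    (hv : Submodule.span R (Set.range v) = ⊤) (x : M) (hx : x ∈ idealSMulTop m M) :
    ∃ a : Fin r → R, (∀ i, a i ∈ m) ∧ ∑ i, a i • v i = x := by
  unfold idealSMulTop at hx
  induction hx using Submodule.span_induction with
  | mem x h =>
    obtain ⟨a, ha, y, rfl⟩ := h
    have hy : y ∈ Submodule.span R (Set.range v) := by rw [hv]; trivial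
    rw [Submodule.mem_span_range_iff_exists_fun] at hy
    obtain ⟨c, rfl⟩ := hy
    exact ⟨fun i => a * c i, fun i => aux_right m hloc _ _ ha, by
      simp [Finset.smul_sum, mul_smul]⟩
  | zero => exact ⟨0, fun i => m.zero_mem, by simp⟩
  | add x y _ _ hx hy =>
    obtain ⟨a, ha, rfl⟩ := hx
    obtain ⟨b, hb, rfl⟩ := hy
    exact ⟨a + b, fun i => m.add_mem (ha i) (hb i), by simp [add_smul, Finset.sum_add_distrib]⟩
  | smul c x _ hx =>
    obtain ⟨a, ha, rfl⟩ := hx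
    exact ⟨fun i => c * a i, fun i => m.mul_mem_left _ (ha i), by
      simp [Finset.smul_sum, mul_smul]⟩

theorem aux_map {R : Type} [Ring R] (m : Ideal R)
    {M N : Type} [AddCommGroup M] [Module R M] [AddCommGroup N] [Module R N]
    (f : M →ₗ[R] N) (x : M) (hx : x ∈ idealSMulTop m M) : f x ∈ idealSMulTop m N := by
  unfold idealSMulTop at hx
  have : Submodule.span R {z : M | ∃ a ∈ m, ∃ y : M, z = a • y} ≤
      (idealSMulTop m N).comap f := by
    rw [Submodule.span_le]
    rintro _ ⟨a, ha, y, rfl⟩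
    simp only [Submodule.comap_coe, Set.mem_preimage, map_smul]
    exact Submodule.subset_span ⟨a, ha, _, rfl⟩
  exact this hx

theorem aux_nak {R : Type} [Ring R] [Nontrivial R]
    (m : Ideal R) (hloc : ∀ x : R, x ∈ m ↔ x ∈ nonunits R)
    (M : Type) [AddCommGroup M] [Module R M] [hM : Module.Finite R M]
    (N : Submodule R M) (hN : N ⊔ idealSMulTop m M = ⊤) : N = ⊤ := by
  obtain ⟨r, v, hv, hmin⟩ := aux_mingens m hloc (M ⧸ N)
  have hall : ∀ q : M ⧸ N, q ∈ idealSMulTop m (M ⧸ N) := by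
    intro q
    obtain ⟨x, rfl⟩ := N.mkQ_surjective q
    have hx : x ∈ N ⊔ idealSMulTop m M := by rw [hN]; trivial
    obtain ⟨y, hy, z, hz, rfl⟩ := Submodule.mem_sup.1 hx
    rw [map_add]
    have : N.mkQ y = 0 := by simpa using hy
    rw [this, zero_add]
    exact aux_map m _ _ hz
  cases r with
  | zero =>
    have : (⊥ : Submodule R (M ⧸ N)) = ⊤ := by
      rw [← hv]; simp
    rw [eq_top_iff]
    intro x _
    have h : N.mkQ x ∈ (⊥ : Submodule R (M ⧸ N)) := by rw [this]; trivial
    simpa using h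
  | succ r =>
    exfalso
    obtain ⟨a, ha, h⟩ := aux_memsmul m hloc _ v hv (v 0) (hall _)
    have := hmin (Pi.single 0 1 - a) (by
      simp [sub_smul, Finset.sum_sub_distrib, h, Pi.single_apply, ite_smul]) 0
    simp only [Pi.sub_apply, Pi.single_eq_same] at this
    exact aux_one m hloc (by simpa using m.add_mem this (ha 0))

theorem aux_bij {R : Type} [Ring R] [IsNoetherianRing R] [Nontrivial R]
    (m : Ideal R) (hloc : ∀ x : R, x ∈ m ↔ x ∈ nonunits R)
    (M : Type) [AddCommGroup M] [Module R M] [hM : Module.Finite R M]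
    (u : M →ₗ[R] M) (hu : ∀ x, u x - x ∈ idealSMulTop m M) : Function.Bijective u := by
  apply IsNoetherian.bijective_of_surjective_endomorphism
  rw [← LinearMap.range_eq_top]
  apply aux_nak m hloc
  rw [eq_top_iff]
  intro x _
  have : x = u x + -(u x - x) := by abel
  rw [this]
  exact Submodule.add_mem_sup ⟨x, rfl⟩ (Submodule.neg_mem _ (hu x))

theorem aux_cover {R : Type} [Ring R]
    (m : Ideal R) (hloc : ∀ x : R, x ∈ m ↔ x ∈ nonunits R)
    (M : Type) [AddCommGroup M] [Module R M] (B : Submodule R M)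
    [hM : Module.Finite R (M ⧸ B)] :
    ∃ (r : ℕ) (ψ : (Fin r → R) →ₗ[R] M), (∀ x, ∃ y, ψ y - x ∈ B) ∧
      ∀ y, ψ y ∈ B → y ∈ idealSMulTop m (Fin r → R) := by
  classical
  obtain ⟨r, v, hv, hmin⟩ := aux_mingens m hloc (M ⧸ B)
  choose w hw using fun i => B.mkQ_surjective (v i)
  refine ⟨r, Fintype.linearCombination R w, ?_, ?_⟩
  · intro x
    have hx : B.mkQ x ∈ Submodule.span R (Set.range v) := by rw [hv]; trivial
    rw [Submodule.mem_span_range_iff_exists_fun] at hx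
    obtain ⟨c, hc⟩ := hx
    refine ⟨c, ?_⟩
    rw [← Submodule.ker_mkQ B, LinearMap.mem_ker, map_sub, ← hc]
    simp [Fintype.linearCombination_apply, ← hw]
  · intro y hy
    have := hmin y (by
      rw [← Submodule.ker_mkQ B, LinearMap.mem_ker] at hy
      rw [← hy]
      simp [Fintype.linearCombination_apply, ← hw])
    have hy : y = ∑ i, y i • (Pi.single i 1 : Fin r → R) := by
      ext j
      simp [Finset.sum_apply, Pi.single_apply]
    rw [hy]
    exact Submodule.sum_mem _ fun i _ => Submodule.subset_span ⟨_, this i, _, rfl⟩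

theorem aux_rec (St : ℤ → Type) (T : ∀ n, St n) (Rel : ∀ n, St n → St (n + 1) → Prop)
    (N : ℤ) (hT : ∀ n < N, Rel n (T n) (T (n + 1)))
    (step : ∀ n s, ∃ s', Rel n s s') :
    ∃ S : ∀ n, St n, (∀ n ≤ N, S n = T n) ∧ ∀ n, Rel n (S n) (S (n + 1)) := by
  choose g hg using step
  let S : ∀ n, St n := fun n =>
    Int.inductionOn' (motive := St) n N (T N) (fun k _ s => g k s) (fun k _ _ => T (k - 1))
  have h1 : ∀ n ≤ N, S n = T n := by
    intro n hn
    rcases hn.eq_or_lt with rfl | h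
    · exact Int.inductionOn'_self ..
    · obtain ⟨k, rfl⟩ : ∃ k, n = k - 1 := ⟨n + 1, by omega⟩
      exact Int.inductionOn'_sub_one (by omega)
  refine ⟨S, h1, fun n => ?_⟩
  by_cases h : n < N
  · rw [h1 n h.le, h1 (n + 1) (by omega)]
    exact hT n h
  · have : S (n + 1) = g n (S n) := Int.inductionOn'_add_one (by omega)
    rw [this]
    exact hg n _

theorem aux_step {R : Type} [Ring R] [IsNoetherianRing R]
    (m : Ideal R) (hloc : ∀ x : R, x ∈ m ↔ x ∈ nonunits R)
    {F C0 C1 C2 : Type} [AddCommGroup F] [Module R F] [Module.Finite R F]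
    [AddCommGroup C0] [Module R C0] [AddCommGroup C1] [Module R C1]
    [AddCommGroup C2] [Module R C2] (d1 : C1 →ₗ[R] C0) (d2 : C2 →ₗ[R] C1)
    [hfin : Module.Finite R (LinearMap.ker d1 ⧸
      (LinearMap.range d2).comap (LinearMap.ker d1).subtype)]
    (K : Submodule R F) (φ : F →ₗ[R] C0) :
    ∃ (r : ℕ) (d : (Fin r → R) →ₗ[R] F) (φ' : (Fin r → R) →ₗ[R] C1),
      (∀ y, d y ∈ K) ∧ (∀ y, φ (d y) = d1 (φ' y)) ∧
      (∀ x ∈ K, ∀ c, φ x = d1 c → ∃ y e, d y = x ∧ φ' y - c = d2 e) ∧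
      (∀ y, d y = 0 → ∀ e, φ' y = d2 e → y ∈ idealSMulTop m (Fin r → R)) := by
  let Z : Submodule R (F × C1) :=
    K.comap (LinearMap.fst R F C1) ⊓
      LinearMap.ker (φ ∘ₗ LinearMap.fst R F C1 - d1 ∘ₗ LinearMap.snd R F C1)
  have hZ : ∀ p : F × C1, p ∈ Z ↔ p.1 ∈ K ∧ φ p.1 = d1 p.2 := by
    intro p
    simp [Z, sub_eq_zero]
  let B : Submodule R Z := ((⊥ : Submodule R F).prod (LinearMap.range d2)).comap Z.subtype
  have hB : ∀ p : Z, p ∈ B ↔ p.1.1 = 0 ∧ ∃ e, d2 e = p.1.2 := by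
    intro p
    simp [B, Submodule.mem_prod]
  let A := (LinearMap.range d2).comap (LinearMap.ker d1).subtype
  let i0 : LinearMap.ker d1 →ₗ[R] Z :=
    LinearMap.codRestrict Z (LinearMap.inr R F C1 ∘ₗ (LinearMap.ker d1).subtype) (by
      intro c
      rw [hZ]
      have := c.2
      rw [LinearMap.mem_ker] at this
      simp)
  let i : (LinearMap.ker d1 ⧸ A) →ₗ[R] (Z ⧸ B) := Submodule.mapQ A B i0 (by
    rintro c ⟨e, he⟩
    rw [Submodule.mem_comap, hB]
    exact ⟨rfl, e, he⟩)
  let p : (Z ⧸ B) →ₗ[R] F := Submodule.liftQ B (LinearMap.fst R F C1 ∘ₗ Z.subtype) (by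
    intro c hc
    rw [hB] at hc
    exact hc.1)
  have hex : LinearMap.range i = LinearMap.ker p := by
    ext q
    constructor
    · rintro ⟨w, rfl⟩
      obtain ⟨w, rfl⟩ := Submodule.mkQ_surjective _ w
      rw [LinearMap.mem_ker]
      rfl
    · intro hq
      obtain ⟨w, rfl⟩ := Submodule.mkQ_surjective _ q
      rw [LinearMap.mem_ker] at hq
      have h1 : w.1.1 = 0 := hq
      have h2 := (hZ w.1).1 w.2
      have h3 : d1 w.1.2 = 0 := by rw [← h2.2, h1, map_zero]
      refine ⟨Submodule.mkQ _ ⟨w.1.2, h3⟩, ?_⟩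
      have h4 : i0 ⟨w.1.2, h3⟩ = w := by
        apply Subtype.ext
        apply Prod.ext
        · exact h1.symm
        · rfl
      change Submodule.mkQ _ (i0 ⟨w.1.2, h3⟩) = _
      rw [h4]
  have hN : IsNoetherian R (Z ⧸ B) := isNoetherian_of_range_eq_ker i p hex
  obtain ⟨r, ψ, hψ, hker⟩ := aux_cover m hloc Z B
  refine ⟨r, LinearMap.fst R F C1 ∘ₗ Z.subtype ∘ₗ ψ, LinearMap.snd R F C1 ∘ₗ Z.subtype ∘ₗ ψ,
    ?_, ?_, ?_, ?_⟩
  · intro y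
    exact ((hZ _).1 (ψ y).2).1
  · intro y
    exact ((hZ _).1 (ψ y).2).2
  · intro x hx c hc
    obtain ⟨y, hy⟩ := hψ ⟨(x, c), (hZ _).2 ⟨hx, hc⟩⟩
    rw [hB] at hy
    obtain ⟨h1, e, he⟩ := hy
    exact ⟨y, e, sub_eq_zero.1 h1, he.symm⟩
  · intro y hy e he
    exact hker y ((hB _).2 ⟨hy, e, he.symm⟩)

open CategoryTheory

theorem sc_fin {R : Type} [Ring R] (S : ShortComplex (ModuleCat.{0} R))
    (h : Module.Finite R S.homology) :
    Module.Finite R (LinearMap.ker S.g.hom ⧸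
      (LinearMap.range S.f.hom).comap (LinearMap.ker S.g.hom).subtype) := by
  have h1 : Module.Finite R S.moduleCatLeftHomologyData.H :=
    Module.Finite.equiv S.moduleCatHomologyIso.toLinearEquiv
  have h2 : LinearMap.range S.moduleCatToCycles =
      (LinearMap.range S.f.hom).comap (LinearMap.ker S.g.hom).subtype := by
    ext x
    constructor
    · rintro ⟨y, rfl⟩
      exact ⟨y, rfl⟩
    · rintro ⟨y, hy⟩
      exact ⟨y, Subtype.ext hy⟩
  rw [← h2]
  exact h1

theorem sc_exact {R : Type} [Ring R] (S : ShortComplex (ModuleCat.{0} R))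
    (h : Subsingleton S.homology) (x : S.X₂) (hx : S.g x = 0) : ∃ y, S.f y = x := by
  have h1 : S.Exact := by
    rw [ShortComplex.exact_iff_isZero_homology]
    exact ModuleCat.isZero_of_subsingleton _
  exact S.moduleCat_exact_iff.1 h1 x hx

theorem sc_quasiIso {R : Type} [Ring R] {S T : ShortComplex (ModuleCat.{0} R)} (φ : S ⟶ T)
    (hs : ∀ c : T.X₂, T.g c = 0 → ∃ x, S.g x = 0 ∧ ∃ e, φ.τ₂ x - c = T.f e)
    (hi : ∀ x, S.g x = 0 → ∀ c, φ.τ₂ x = T.f c → ∃ y, S.f y = x) :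
    ShortComplex.QuasiIso φ := by
  let γ : ShortComplex.LeftHomologyMapData φ S.moduleCatLeftHomologyData
    T.moduleCatLeftHomologyData := default
  rw [γ.quasiIso_iff]
  let gK : LinearMap.ker S.g.hom →ₗ[R] LinearMap.ker T.g.hom := γ.φK.hom
  let gH : (LinearMap.ker S.g.hom ⧸ LinearMap.range S.moduleCatToCycles) →ₗ[R]
    (LinearMap.ker T.g.hom ⧸ LinearMap.range T.moduleCatToCycles) := γ.φH.hom
  have hK : ∀ x : LinearMap.ker S.g.hom, (gK x).1 = φ.τ₂ x.1 := by
    intro x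
    have := ConcreteCategory.congr_hom γ.commi x
    exact this
  have hπ : ∀ x : LinearMap.ker S.g.hom,
    gH (Submodule.Quotient.mk x) = Submodule.Quotient.mk (gK x) := by
    intro x
    exact ConcreteCategory.congr_hom γ.commπ x
  rw [ConcreteCategory.isIso_iff_bijective]
  change Function.Bijective gH
  constructor
  · rw [← LinearMap.ker_eq_bot, eq_bot_iff]
    intro q hq
    obtain ⟨x, rfl⟩ := Submodule.Quotient.mk_surjective _ q
    have h1 := (hπ x).symm.trans hq
    rw [Submodule.Quotient.mk_eq_zero] at h1
    obtain ⟨e, he⟩ := h1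
    obtain ⟨y, hy⟩ := hi x.1 x.2 e (by rw [← hK, ← he]; rfl)
    rw [Submodule.mem_bot, Submodule.Quotient.mk_eq_zero]
    exact ⟨y, Subtype.ext hy⟩
  · intro q
    obtain ⟨c, rfl⟩ := Submodule.Quotient.mk_surjective _ q
    obtain ⟨x, hx, e, he⟩ := hs c.1 c.2
    refine ⟨Submodule.Quotient.mk (⟨x, hx⟩ : LinearMap.ker S.g.hom), ?_⟩
    refine (hπ _).trans ?_
    rw [Submodule.Quotient.eq]
    refine ⟨e, Subtype.ext ?_⟩
    change T.f e = (gK ⟨x, hx⟩).1 - c.1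
    rw [hK, ← he]

structure StEx {R : Type} [Ring R] (m : Ideal R) (C : ChainComplex (ModuleCat.{0} R) ℤ) (n : ℤ) where
  r : ℕ
  φ : (Fin r → R) →ₗ[R] C.X n
  K : Submodule R (Fin r → R)
  hmin : ∀ x ∈ K, ∀ c, φ x = C.d (n + 1) n c → x ∈ idealSMulTop m (Fin r → R)

structure RelEx {R : Type} [Ring R] (m : Ideal R) (C : ChainComplex (ModuleCat.{0} R) ℤ) (n : ℤ)
    (s : StEx m C n) (s' : StEx m C (n + 1))
    (d : (Fin s'.r → R) →ₗ[R] (Fin s.r → R)) : Prop where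
  hd : ∀ y, d y ∈ s.K
  hK : s'.K = LinearMap.ker d
  hφ : ∀ y, s.φ (d y) = C.d (n + 1) n (s'.φ y)
  hex : ∀ x ∈ s.K, ∀ c, s.φ x = C.d (n + 1) n c →
    ∃ y e, d y = x ∧ s'.φ y - c = C.d (n + 1 + 1) (n + 1) e

theorem homology_fin {R : Type} [Ring R] (C : ChainComplex (ModuleCat.{0} R) ℤ) (n : ℤ)
    (h : Module.Finite R ↥(C.sc (n + 1)).homology) :
    Module.Finite R (LinearMap.ker (C.d (n + 1) n).hom ⧸
      (LinearMap.range (C.d (n + 1 + 1) (n + 1)).hom).comap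
        (LinearMap.ker (C.d (n + 1) n).hom).subtype) := by
  have h1 : Module.Finite R (C.sc' (n + 1 + 1) (n + 1) n).homology :=
    Module.Finite.equiv (ShortComplex.homologyMapIso
      (C.isoSc' (n + 1 + 1) (n + 1) n (by simp) (by simp))).toLinearEquiv
  exact sc_fin _ h1

theorem homology_exact {R : Type} [Ring R] (C : ChainComplex (ModuleCat.{0} R) ℤ) (n : ℤ)
    (h : Subsingleton ↥(C.sc (n + 1)).homology) (x : C.X (n + 1)) (hx : C.d (n + 1) n x = 0) :
    ∃ y, C.d (n + 1 + 1) (n + 1) y = x := by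
  have h1 : Subsingleton (C.sc' (n + 1 + 1) (n + 1) n).homology :=
    (ShortComplex.homologyMapIso
      (C.isoSc' (n + 1 + 1) (n + 1) n (by simp) (by simp))).toLinearEquiv.symm.subsingleton
  exact sc_exact _ h1 x hx

theorem exists_min {R : Type} [Ring R] [IsNoetherianRing R]
    (m : Ideal R) (hloc : ∀ x : R, x ∈ m ↔ x ∈ nonunits R)
    (C : ChainComplex (ModuleCat.{0} R) ℤ)
    (hbdd : ∃ N : ℤ, ∀ i < N, Subsingleton ↥(C.homology i))
    (hfg : ∀ i : ℤ, Module.Finite R ↥(C.homology i)) :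
    ∃ (F : ChainComplex (ModuleCat.{0} R) ℤ) (f : F ⟶ C), IsMinimalResolution m F C f := by
  obtain ⟨N, hN⟩ := hbdd
  obtain ⟨S, hS0, hS⟩ := aux_rec (StEx m C)
    (fun n => ⟨0, 0, ⊥, fun x hx c _ => by
      rw [Submodule.mem_bot] at hx; rw [hx]; exact Submodule.zero_mem _⟩)
    (fun n s s' => ∃ d, RelEx m C n s s' d) (N - 1)
    (by
      intro n hn
      refine ⟨0, ⟨fun y => Submodule.zero_mem _, ?_, ?_, ?_⟩⟩
      · exact Subsingleton.elim _ _
      · intro y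
        simp
      · intro x _ c hc
        have : C.d (n + 1) n c = 0 := by rw [← hc]; simp
        obtain ⟨e, he⟩ := homology_exact C n (hN _ (by omega)) c this
        exact ⟨0, -e, Subsingleton.elim _ _, by simp [he]⟩)
    (by
      intro n s
      have := homology_fin C n (hfg _)
      obtain ⟨r, d, φ', h1, h2, h3, h4⟩ := aux_step m hloc (C.d (n + 1) n).hom
        (C.d (n + 1 + 1) (n + 1)).hom s.K s.φ
      exact ⟨⟨r, φ', LinearMap.ker d, fun x hx c hc => h4 x hx c hc⟩, d, ⟨h1, rfl, h2, h3⟩⟩)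
  choose d hd using hS
  have hdd : ∀ n y, d n (d (n + 1) y) = 0 := by
    intro n y
    have := (hd (n + 1)).hd y
    rw [(hd n).hK] at this
    exact this
  let F : ChainComplex (ModuleCat.{0} R) ℤ := ChainComplex.of
    (fun n => ModuleCat.of R (Fin (S n).r → R)) (fun n => ModuleCat.ofHom (d n)) (by
      intro n
      ext1
      exact LinearMap.ext (hdd n))
  have hFd : ∀ n, F.d (n + 1) n = ModuleCat.ofHom (d n) := fun n =>
    ChainComplex.of_d (fun n => ModuleCat.of R (Fin (S n).r → R)) (fun n => ModuleCat.ofHom (d n)) n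
  let f : F ⟶ C := ChainComplex.ofHom (X := F) (fun n => ModuleCat.ofHom (S n).φ) (by
    intro n
    rw [hFd]
    ext1
    exact LinearMap.ext fun y => ((hd n).hφ y).symm)
  refine ⟨F, f, ?_, ?_, ?_, ?_, ?_⟩
  · intro i
    change Module.Free R (Fin (S i).r → R)
    infer_instance
  · intro i
    change Module.Finite R (Fin (S i).r → R)
    infer_instance
  · intro i j x
    by_cases hij : j + 1 = i
    · subst hij
      rw [hFd]
      exact (S j).hmin _ ((hd j).hd x) _ ((hd j).hφ x)
    · rw [F.shape i j hij]
      exact Submodule.zero_mem _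
  · refine ⟨N, fun i hi => ?_⟩
    change Subsingleton (Fin (S i).r → R)
    rw [hS0 i (by omega)]
    infer_instance
  · constructor
    intro i
    obtain ⟨n, rfl⟩ : ∃ n, i = n + 1 := ⟨i - 1, by omega⟩
    rw [quasiIsoAt_iff' f (n + 1 + 1) (n + 1) n (by simp) (by simp)]
    apply sc_quasiIso
    · intro c hc
      obtain ⟨y, e, h1, h2⟩ := (hd n).hex 0 (Submodule.zero_mem _) c (by
        rw [map_zero]; exact hc.symm)
      refine ⟨y, ?_, e, h2⟩
      change F.d (n + 1) n y = 0
      rw [hFd]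
      exact h1
    · intro x hx c hc
      change F.d (n + 1) n x = 0 at hx
      rw [hFd] at hx
      have hx' : x ∈ (S (n + 1)).K := by rw [(hd n).hK]; exact hx
      obtain ⟨y, e, h1, h2⟩ := (hd (n + 1)).hex x hx' c hc
      refine ⟨y, ?_⟩
      change F.d (n + 1 + 1) (n + 1) y = x
      rw [hFd]
      exact h1

noncomputable abbrev toCo (R : Type) [Ring R] :
    ChainComplex (ModuleCat.{0} R) ℤ ≌ CochainComplex (ModuleCat.{0} R) ℤ :=
  ChainComplex.cochainComplexEquivalence _

theorem toCo_quasiIso {R : Type} [Ring R] {F C : ChainComplex (ModuleCat.{0} R) ℤ} (f : F ⟶ C)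
    [QuasiIso f] : QuasiIso ((toCo R).functor.map f) := by
  constructor
  intro i
  rw [quasiIsoAt_iff' _ (i - 1) i (i + 1) (by simp) (by simp)]
  have h : QuasiIsoAt f (-i) := inferInstance
  rw [quasiIsoAt_iff' f (-(i - 1)) (-i) (-(i + 1)) (by simp; ring) (by simp; ring)] at h
  exact h

theorem toCo_kproj {R : Type} [Ring R] (F : ChainComplex (ModuleCat.{0} R) ℤ)
    (hfree : ∀ i, Module.Free R ↥(F.X i)) (hb : ∃ N : ℤ, ∀ i < N, Subsingleton ↥(F.X i)) :
    ((toCo R).functor.obj F).IsKProjective := by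
  obtain ⟨N, hN⟩ := hb
  have : ((toCo R).functor.obj F).IsStrictlyLE (-N) := by
    rw [CochainComplex.isStrictlyLE_iff]
    intro i hi
    have : Subsingleton ↥(F.X (-i)) := hN _ (by omega)
    exact ModuleCat.isZero_of_subsingleton (F.X (-i))
  have : ∀ n, Projective (((toCo R).functor.obj F).X n) := by
    intro n
    have := hfree (-n)
    exact ModuleCat.projective_of_free (Module.Free.chooseBasis R (F.X (-n)))
  exact CochainComplex.isKProjective_of_projective _ (-N)

open DerivedCategory HomologicalComplex in
theorem exists_heq {A : Type*} [Category A] [Abelian A] {K L C : CochainComplex A ℤ}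
    [K.IsKProjective] [L.IsKProjective] (f : K ⟶ C) (g : L ⟶ C) [QuasiIso f] [QuasiIso g] :
    Nonempty (HomotopyEquiv K L) := by
  let := HasDerivedCategory.standard A
  obtain ⟨g, hg⟩ := (CochainComplex.IsKProjective.Qh_map_bijective K
    ((HomotopyCategory.quotient _ _).obj L)).surjective
    ((quotientCompQhIso A).hom.app K ≫ Q.map f ≫ inv (Q.map g) ≫ (quotientCompQhIso A).inv.app L)
  obtain ⟨u, rfl⟩ := (HomotopyCategory.quotient _ _).map_surjective g
  have hi : IsIso (Q.map u) := by
    have : IsIso (Qh.map ((HomotopyCategory.quotient A (.up ℤ)).map u)) := by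
      rw [hg]; infer_instance
    exact (NatIso.isIso_map_iff (quotientCompQhIso A) u).1 this
  have : QuasiIso u := by
    rwa [← isIso_Q_map_iff_quasiIso]
  have := (CochainComplex.IsKProjective.quasiIso_iff u).1 this
  exact ⟨this.choose⟩

theorem bij_of_homotopy {R : Type} [Ring R] [IsNoetherianRing R] [Nontrivial R]
    (m : Ideal R) (hloc : ∀ x : R, x ∈ m ↔ x ∈ nonunits R)
    {c : ComplexShape ℤ} (K : HomologicalComplex (ModuleCat.{0} R) c)
    (hfin : ∀ i, Module.Finite R ↥(K.X i))
    (hmin : ∀ (i j : ℤ) (x : K.X i), K.d i j x ∈ idealSMulTop m ↥(K.X j))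
    (u : K ⟶ K) (h : Homotopy u (𝟙 K)) (i : ℤ) : IsIso (u.f i) := by
  rw [ConcreteCategory.isIso_iff_bijective]
  have := hfin i
  refine aux_bij m hloc (K.X i) (u.f i).hom fun x => ?_
  have h1 := ConcreteCategory.congr_hom (h.comm i) x
  have h2 : (u.f i).hom x = h.hom (c.next i) i (K.d i (c.next i) x) +
      K.d (c.prev i) i (h.hom i (c.prev i) x) + x := h1
  rw [h2, add_sub_cancel_right]
  exact Submodule.add_mem _ (aux_map m _ _ (hmin _ _ _)) (hmin _ _ _)

theorem stmt_1
    (R : Type) [Ring R] [IsNoetherianRing R] [Nontrivial R]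
    (m : Ideal R) (hloc : ∀ x : R, x ∈ m ↔ x ∈ nonunits R)
    (C : ChainComplex (ModuleCat R) ℤ)
    (hbdd : ∃ N : ℤ, ∀ i < N, Subsingleton ↥(C.homology i))
    (hfg : ∀ i : ℤ, Module.Finite R ↥(C.homology i)) :
    -- existence of a minimal resolution
    (∃ (F : ChainComplex (ModuleCat R) ℤ) (f : F ⟶ C), IsMinimalResolution m F C f) ∧
    -- uniqueness (up to isomorphism) of minimal resolutions
    (∀ (F F' : ChainComplex (ModuleCat R) ℤ) (f : F ⟶ C) (f' : F' ⟶ C),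
      IsMinimalResolution m F C f → IsMinimalResolution m F' C f' →
      Nonempty (F ≅ F')) := by
  refine ⟨exists_min m hloc C hbdd hfg, ?_⟩
  rintro F F' f f' ⟨h1, h2, h3, h4, h5⟩ ⟨h1', h2', h3', h4', h5'⟩
  have k1 := toCo_kproj F h1 h4
  have k2 := toCo_kproj F' h1' h4'
  have q1 := toCo_quasiIso f
  have q2 := toCo_quasiIso f'
  obtain ⟨e⟩ := exists_heq ((toCo R).functor.map f) ((toCo R).functor.map f')
  have i1 : ∀ i, IsIso ((e.hom ≫ e.inv).f i) := bij_of_homotopy m hloc _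
    (fun i => h2 (-i)) (fun i j x => h3 (-i) (-j) x) _ e.homotopyHomInvId
  have i2 : ∀ i, IsIso ((e.inv ≫ e.hom).f i) := bij_of_homotopy m hloc _
    (fun i => h2' (-i)) (fun i j x => h3' (-i) (-j) x) _ e.homotopyInvHomId
  have j1 : IsIso (e.hom ≫ e.inv) := HomologicalComplex.Hom.isIso_of_components _
  have j2 : IsIso (e.inv ≫ e.hom) := HomologicalComplex.Hom.isIso_of_components _
  have m1 : Mono e.hom := mono_of_mono e.hom e.inv
  have s2 : IsSplitEpi e.hom := IsSplitEpi.mk' ⟨inv (e.inv ≫ e.hom) ≫ e.inv, by simp⟩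
  have j3 : IsIso e.hom := isIso_of_mono_of_isSplitEpi e.hom
  exact ⟨(toCo R).functor.preimageIso (asIso e.hom)⟩
end

section
/- Let (C(i))_{i∈I} be a family of chain complexes of flat left B-modules. Then the termwise product ∏_{i∈I} C(i) is a chain complex of flat left B_I-modules, and for every prime ideal x of A_I the ultraproduct C(∞) := A_{I,x} ⊗_{A_I} ∏_{i∈I} C(i) is a chain complex of flat left B-modules, where the B-module structure comes from the canonical isomorphism A_{I,x} ⊗_{A_I} B_I ≅ B. -/
/-!
STATEMENT 6: Fix a prime `p`, a finite commutative local ring `A` of characteristic `p`,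
and a (possibly non-commutative) finite `A`-algebra `B`.  Let `(C(i))_{i∈I}` be a family of
chain complexes of flat left `B`-modules.  Then the termwise product `∏_{i∈I} C(i)` is a
chain complex of flat left `B_I`-modules, and for every prime ideal `x` of `A_I` the
ultraproduct `C(∞) := A_{I,x} ⊗_{A_I} ∏_{i∈I} C(i)` is a chain complex of flat left
`B`-modules, where the `B`-module structure comes from the canonical isomorphism
`A_{I,x} ⊗_{A_I} B_I ≅ B` (equivalently, it is characterized on pure tensors by
`b • (z ⊗ m) = z ⊗ (i ↦ b • m i)`; we quantify over all incarnations of `C(∞)_n` as a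
`B`-module with this property).
-/

open scoped TensorProduct

/-- Flatness of a left module over a possibly non-commutative ring, via the equational
criterion: every finite relation is a consequence of relations in the ring. -/
def ModuleFlat (B M : Type) [Ring B] [AddCommGroup M] [Module B M] : Prop :=
  ∀ (n : ℕ) (b : Fin n → B) (m : Fin n → M), (∑ j, b j • m j) = 0 →
    ∃ (κ : ℕ) (c : Fin n → Fin κ → B) (y : Fin κ → M),
      (∀ l, (∑ j, b j * c j l) = 0) ∧ (∀ j, m j = ∑ l, c j l • y l)

/-- The canonical ring homomorphism `∏ A →+* ∏ B` induced componentwise by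
`algebraMap A B`. -/
def piAlgRingHom (A B : Type) [CommRing A] [Ring B] [Algebra A B] (I : Type) :
    (I → A) →+* (I → B) :=
  Pi.ringHom fun i => (algebraMap A B).comp (Pi.evalRingHom (fun _ : I => A) i)

/-- A product of left `B`-modules, regarded as a module over `∏ A` via the componentwise
action through `algebraMap A B`. -/
noncomputable def piAModule (A B : Type) [CommRing A] [Ring B] [Algebra A B] (I : Type)
    (M : I → Type) [∀ i, AddCommGroup (M i)] [∀ i, Module B (M i)] :
    Module (I → A) (∀ i, M i) :=
  Module.compHom _ (piAlgRingHom A B I)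

/-- Uniform version of the equational criterion over a finite ring: the coefficients may be
chosen to depend on `b` only. -/
lemma ModuleFlat.uniform {B M : Type} [Ring B] [Fintype B] [DecidableEq B] [AddCommGroup M]
    [Module B M] (h : ModuleFlat B M) (n : ℕ) (b : Fin n → B) (m : Fin n → M)
    (hm : (∑ j, b j • m j) = 0) :
    ∃ y : (Fin n → B) → M, ∀ j,
      m j = ∑ l : Fin n → B, (if ∑ j', b j' * l j' = 0 then l j else 0) • y l := by
  obtain ⟨κ, c, y, hc, hy⟩ := h n b m hm
  refine ⟨fun l => ∑ k : Fin κ, if (fun j => c j k) = l then y k else 0, fun j => ?_⟩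
  rw [hy j]
  simp only [Finset.smul_sum]
  rw [Finset.sum_comm]
  refine Finset.sum_congr rfl fun k _ => ?_
  rw [Finset.sum_eq_single (fun j => c j k)]
  · simp [hc k]
  · intro l _ hl
    simp [Ne.symm hl]
  · simp

/-- Finitely many elements of a localized module have a common denominator. -/
lemma common_denominator {R P : Type} [CommRing R] [AddCommGroup P] [Module R P]
    (S : Submonoid R) (n : ℕ) (u : Fin n → Localization S ⊗[R] P) :
    ∃ (s : S) (w : Fin n → P), ∀ j, u j = (Localization.mk 1 s : Localization S) ⊗ₜ[R] w j := by
  have hf : IsLocalizedModule S (TensorProduct.mk R (Localization S) P 1) :=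
    (isLocalizedModule_iff_isBaseChange S (Localization S) _).mpr
      (TensorProduct.isBaseChange R P (Localization S))
  choose a ha using fun j => hf.surj (u j)
  refine ⟨∏ j, (a j).2, fun j => (∏ k ∈ Finset.univ.erase j, ((a k).2 : R)) • (a j).1,
    fun j => ?_⟩
  have h1 : (∏ k, (a k).2 : S) • u j = (1 : Localization S) ⊗ₜ[R]
      ((∏ k ∈ Finset.univ.erase j, ((a k).2 : R)) • (a j).1) := by
    have h2 := ha j
    rw [TensorProduct.mk_apply] at h2
    rw [TensorProduct.tmul_smul, ← h2, Submonoid.smul_def, Submonoid.smul_def, smul_smul,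
      Finset.prod_erase_mul _ _ (Finset.mem_univ j)]
    simp
  generalize (∏ k, (a k).2 : S) = s at *
  have h3 : (Localization.mk 1 s : Localization S) • ((s • u j) : Localization S ⊗[R] P)
      = u j := by
    rw [Submonoid.smul_def, ← algebraMap_smul (Localization S) (s : R) (u j), smul_smul,
      ← Localization.mk_one_eq_algebraMap, Localization.mk_mul]
    simp [Localization.mk_self]
  rw [← h3, h1, TensorProduct.smul_tmul', smul_eq_mul, mul_one]

lemma tmul_eq_zero_exists {R P : Type} [CommRing R] [AddCommGroup P] [Module R P]
    (S : Submonoid R) (s : S) (w : P)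
    (h : (Localization.mk 1 s : Localization S) ⊗ₜ[R] w = 0) : ∃ t : S, (t : R) • w = 0 := by
  have hf : IsLocalizedModule S (TensorProduct.mk R (Localization S) P 1) :=
    (isLocalizedModule_iff_isBaseChange S (Localization S) _).mpr
      (TensorProduct.isBaseChange R P (Localization S))
  have h1 : TensorProduct.mk R (Localization S) P 1 w = 0 := by
    have := congrArg (fun z => (algebraMap R (Localization S) s) • z) h
    simp only [TensorProduct.smul_tmul', smul_zero] at this
    rw [smul_eq_mul, ← Localization.mk_one_eq_algebraMap, Localization.mk_mul] at this
    simpa [Localization.mk_self] using this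
  obtain ⟨t, ht⟩ := (IsLocalizedModule.eq_zero_iff S _).mp h1
  exact ⟨t, ht⟩

lemma tmul_eq_mul_tmul {R P : Type} [CommRing R] [AddCommGroup P] [Module R P]
    (S : Submonoid R) (s t : S) (w : P) :
    (Localization.mk 1 s : Localization S) ⊗ₜ[R] w
      = (Localization.mk 1 (s * t) : Localization S) ⊗ₜ[R] ((t : R) • w) := by
  rw [← TensorProduct.smul_tmul]
  congr 1
  rw [Localization.smul_mk, Localization.mk_eq_mk_iff, Localization.r_iff_exists]
  exact ⟨1, by simp⟩

theorem stmt_6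
    (p : ℕ) (hp : p.Prime)
    (A : Type) [CommRing A] [Finite A] [IsLocalRing A] [CharP A p]
    (B : Type) [Ring B] [Algebra A B] [Finite B]
    (I : Type) (x : Ideal (I → A)) [x.IsPrime]
    (C : I → ChainComplex (ModuleCat B) ℤ)
    (hflat : ∀ (i : I) (n : ℤ), ModuleFlat B ↥((C i).X n)) :
    -- the termwise product is a complex of flat `B_I`-modules
    (∀ n : ℤ, ModuleFlat (I → B) (∀ i, ↥((C i).X n))) ∧
    -- and every incarnation of a term of the ultraproduct `C(∞)` as a `B`-module is flat
    (∀ n : ℤ,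
      letI : Module (I → A) (∀ i, ↥((C i).X n)) := piAModule A B I _
      ∀ (N : Type) [AddCommGroup N] [Module B N]
        (φ : N ≃+ (Localization.AtPrime x ⊗[I → A] (∀ i, ↥((C i).X n)))),
        (∀ (b : B) (z : Localization.AtPrime x) (m : ∀ i, ↥((C i).X n)),
          φ (b • φ.symm (z ⊗ₜ m)) = z ⊗ₜ (fun i => b • m i)) →
        ModuleFlat B N) := by
  classical
  have := Fintype.ofFinite B
  refine ⟨fun n k b m hm => ?_, fun n => ?_⟩
  · have hmi : ∀ i, ∑ j, b j i • m j i = 0 := fun i => by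
      have := congrFun hm i
      simpa [Finset.sum_apply] using this
    choose y hy using fun i => (hflat i n).uniform k (fun j => b j i) (fun j => m j i) (hmi i)
    let e := (Fintype.equivFin (Fin k → B)).symm
    refine ⟨_, fun j l i => if ∑ j', b j' i * e l j' = 0 then e l j else 0,
      fun l i => y i (e l), fun l => ?_, fun j => ?_⟩
    · funext i
      simp only [Finset.sum_apply, Pi.mul_apply, Pi.zero_apply]
      by_cases h : ∑ j', b j' i * e l j' = 0
      · simpa [h] using h
      · simp [h]
    · funext i
      rw [hy i j, Finset.sum_apply]
      exact (Equiv.sum_comp e (fun l => (if ∑ j', b j' i * l j' = 0 then l j else 0) • y i l)).symm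
  · letI inst : Module (I → A) (∀ i, ↥((C i).X n)) := piAModule A B I _
    intro N _ _ φ hφ k b m hm
    have hφ' : ∀ (b : B) (z : Localization.AtPrime x) (m : ∀ i, ↥((C i).X n)),
        b • φ.symm (z ⊗ₜ m) = φ.symm (z ⊗ₜ (fun i => b • m i)) := fun b z m => by
      rw [← hφ b z m, φ.symm_apply_apply]
    obtain ⟨s, w, hw⟩ := common_denominator x.primeCompl k (fun j => φ (m j))
    have hw' : ∀ j, m j = φ.symm ((Localization.mk 1 s : Localization.AtPrime x) ⊗ₜ w j) :=
      fun j => by rw [← hw j, φ.symm_apply_apply]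
    have h0 : (Localization.mk 1 s : Localization.AtPrime x) ⊗ₜ[I → A]
        (∑ j, (fun i => b j • w j i)) = 0 := by
      apply φ.symm.injective
      rw [TensorProduct.tmul_sum, map_sum, map_zero, ← hm]
      refine Finset.sum_congr rfl fun j _ => ?_
      rw [hw' j, hφ']
    obtain ⟨t, ht⟩ := tmul_eq_zero_exists _ _ _ h0
    have hsm : ∀ (a : I → A) (v : ∀ i, ↥((C i).X n)) (i : I),
        (a • v) i = algebraMap A B (a i) • v i := fun _ _ _ => rfl
    have hti : ∀ i, ∑ j, b j • ((t : I → A) • w j) i = 0 := fun i => by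
      have h := congrFun ht i
      rw [hsm, Finset.sum_apply, Finset.smul_sum] at h
      rw [← Pi.zero_apply (M := fun i => ↥((C i).X n)) i, ← h]
      refine Finset.sum_congr rfl fun j _ => ?_
      rw [hsm, smul_smul, smul_smul, Algebra.commutes]
    choose y hy using fun i =>
      (hflat i n).uniform k b (fun j => ((t : I → A) • w j) i) (hti i)
    let e := (Fintype.equivFin (Fin k → B)).symm
    refine ⟨_, fun j l => if ∑ j', b j' * e l j' = 0 then e l j else 0,
      fun l => φ.symm ((Localization.mk 1 (s * t) : Localization.AtPrime x) ⊗ₜ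
        (fun i => y i (e l))), fun l => ?_, fun j => ?_⟩
    · by_cases h : ∑ j', b j' * e l j' = 0
      · simpa [h] using h
      · simp [h]
    · rw [hw' j, tmul_eq_mul_tmul x.primeCompl s t]
      simp only [hφ']
      rw [← map_sum, ← TensorProduct.tmul_sum]
      congr 2
      funext i
      rw [hy i j, Finset.sum_apply]
      exact (Equiv.sum_comp e (fun l => (if ∑ j', b j' * l j' = 0 then l j else 0) • y i l)).symm
end
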